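/- arXiv:2504.17932 — 3 statements merged into one kernel-verified Lean document; each statement's English description precedes it below -/
import Mathlib

section
/- Fix d ≥ 2, κ > 0, and initial data (t₀, x₀′, x_{d0}, τ₀, ξ₀′, ξ_{d0}) ∈ ℝ × ℝ^{d−1} × ℝ × ℝ × ℝ^{d−1} × ℝ with ξ₀′ ≠ 0. Set θ₀ := arctan(ξ_{d0}/|ξ₀′|) and I := { s ∈ ℝ : θ₀ − κ|ξ₀′|s ∈ (−π/2, π/2) }. Define on I: τ(s) = τ₀, t(s) = −2τ₀ s + t₀, ξ′(s) = ξ₀′, ξ_d(s) = |ξ₀′| tan(θ₀ − κ|ξ₀′| s), x_d(s) = x_{d0} [ (ξ_{d0}² + |ξ₀′|²)/(2|ξ₀′|²) + cos(2κ|ξ₀′|s) (|ξ₀′|² − ξ_{d0}²)/(2|ξ₀′|²) + sin(2κ|ξ₀′|s) ξ_{d0}/|ξ₀′| ], x′(s) = x₀′ + 2κ ξ₀′ x_{d0} [ s(ξ_{d0}² + |ξ₀′|²)/(2|ξ₀′|²) + (sin(2κ|ξ₀′|s)/(2κ|ξ₀′|))·(|ξ₀′|² − ξ_{d0}²)/(2|ξ₀′|²)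 + ((1 − cos(2κ|ξ₀′|s))/(2κ|ξ₀′|))·(ξ_{d0}/|ξ₀′|) ]. Then these curves take the prescribed initial values at s = 0 and solve the Hamiltonian bicharacteristic system on I: dt/ds = −2τ, dx_d/ds = 2κ x_d ξ_d, dx′/ds = 2κ x_d ξ′, dτ/ds = 0, dξ_d/ds = −κ(ξ_d² + |ξ′|²), dξ′/ds = 0. -/
open Real

noncomputable section

/-- explicit bicharacteristics of the Hamiltonian
`H = κ x_d ξ_d² + κ x_d |ξ′|² − τ²` with nonzero tangential frequency. -/
theorem stmt3 {d : ℕ} (hd : 2 ≤ d) (κ : ℝ) (hκ : 0 < κ)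
    (t₀ : ℝ) (x₀' : EuclideanSpace ℝ (Fin (d - 1))) (xd0 τ₀ : ℝ)
    (ξ₀' : EuclideanSpace ℝ (Fin (d - 1))) (ξd0 : ℝ) (hξ : ξ₀' ≠ 0)
    (θ₀ : ℝ) (hθ : θ₀ = Real.arctan (ξd0 / ‖ξ₀'‖))
    (I : Set ℝ)
    (hI : I = {s : ℝ | θ₀ - κ * ‖ξ₀'‖ * s ∈ Set.Ioo (-(π / 2)) (π / 2)})
    (τ t ξd xd : ℝ → ℝ) (ξ' x' : ℝ → EuclideanSpace ℝ (Fin (d - 1)))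
    (hτ : ∀ s, τ s = τ₀)
    (ht : ∀ s, t s = -2 * τ₀ * s + t₀)
    (hξ' : ∀ s, ξ' s = ξ₀')
    (hξd : ∀ s, ξd s = ‖ξ₀'‖ * Real.tan (θ₀ - κ * ‖ξ₀'‖ * s))
    (hxd : ∀ s, xd s = xd0 *
      ((ξd0 ^ 2 + ‖ξ₀'‖ ^ 2) / (2 * ‖ξ₀'‖ ^ 2)
        + Real.cos (2 * κ * ‖ξ₀'‖ * s) * ((‖ξ₀'‖ ^ 2 - ξd0 ^ 2) / (2 * ‖ξ₀'‖ ^ 2))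
        + Real.sin (2 * κ * ‖ξ₀'‖ * s) * (ξd0 / ‖ξ₀'‖)))
    (hx' : ∀ s, x' s = x₀' +
      (2 * κ * xd0 *
        (s * (ξd0 ^ 2 + ‖ξ₀'‖ ^ 2) / (2 * ‖ξ₀'‖ ^ 2)
          + (Real.sin (2 * κ * ‖ξ₀'‖ * s) / (2 * κ * ‖ξ₀'‖))
              * ((‖ξ₀'‖ ^ 2 - ξd0 ^ 2) / (2 * ‖ξ₀'‖ ^ 2))
          + ((1 - Real.cos (2 * κ * ‖ξ₀'‖ * s)) / (2 * κ * ‖ξ₀'‖))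
              * (ξd0 / ‖ξ₀'‖))) • ξ₀') :
    (t 0 = t₀ ∧ xd 0 = xd0 ∧ x' 0 = x₀' ∧ τ 0 = τ₀ ∧ ξd 0 = ξd0 ∧ ξ' 0 = ξ₀') ∧
    ∀ s ∈ I,
      HasDerivAt t (-2 * τ s) s ∧
      HasDerivAt xd (2 * κ * xd s * ξd s) s ∧
      HasDerivAt x' ((2 * κ * xd s) • ξ' s) s ∧
      HasDerivAt τ 0 s ∧
      HasDerivAt ξd (-κ * ((ξd s) ^ 2 + ‖ξ' s‖ ^ 2)) s ∧
      HasDerivAt ξ' 0 s := by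
  have hr : 0 < ‖ξ₀'‖ := norm_pos_iff.mpr hξ
  obtain rfl : τ = fun _ => τ₀ := funext hτ
  obtain rfl : ξ' = fun _ => ξ₀' := funext hξ'
  obtain rfl := funext ht
  obtain rfl := funext hξd
  obtain rfl := funext hxd
  obtain rfl := funext hx'
  clear hτ hξ' ht hξd hxd hx'
  subst hI
  generalize hrr : ‖ξ₀'‖ = r at *
  have hr0 : r ≠ 0 := hr.ne'
  have hk0 : κ ≠ 0 := hκ.ne'
  have htan : Real.tan θ₀ = ξd0 / r := by rw [hθ, Real.tan_arctan]
  have hcos0 : Real.cos θ₀ ≠ 0 := by rw [hθ]; exact (Real.cos_arctan_pos _).ne'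
  have hsin0 : Real.sin θ₀ = ξd0 / r * Real.cos θ₀ := by
    rw [← htan, Real.tan_mul_cos hcos0]
  refine ⟨⟨by simp, ?_, by simp, rfl, ?_, rfl⟩, ?_⟩
  · simp; field_simp; ring
  · simp [htan]; field_simp
  intro s hs
  have hc : Real.cos (θ₀ - κ * r * s) ≠ 0 := (Real.cos_pos_of_mem_Ioo hs).ne'
  have hlin : HasDerivAt (fun s : ℝ => 2 * κ * r * s) (2 * κ * r) s := by
    simpa using (hasDerivAt_id s).const_mul (2 * κ * r)
  have hlin2 : HasDerivAt (fun s : ℝ => θ₀ - κ * r * s) (-(κ * r)) s := by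
    simpa using ((hasDerivAt_id s).const_mul (κ * r)).const_sub θ₀
  have hS := hlin.sin
  have hC := hlin.cos
  refine ⟨?_, ?_, ?_, hasDerivAt_const _ _, ?_, hasDerivAt_const _ _⟩
  · simpa using ((hasDerivAt_id s).const_mul (-2 * τ₀)).add_const t₀
  · have h := (((hC.mul_const ((r ^ 2 - ξd0 ^ 2) / (2 * r ^ 2))).const_add
      ((ξd0 ^ 2 + r ^ 2) / (2 * r ^ 2))).add (hS.mul_const (ξd0 / r))).const_mul xd0
    refine h.congr_deriv ?_
    have e : 2 * κ * r * s = 2 * (κ * r * s) := by ring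
    have hpos : Real.cos (κ * r * s) + ξd0 / r * Real.sin (κ * r * s) ≠ 0 := by
      intro h0
      apply hc
      rw [Real.cos_sub, hsin0]
      linear_combination Real.cos θ₀ * h0
    have ht' : Real.tan (θ₀ - κ * r * s) =
        (ξd0 / r * Real.cos (κ * r * s) - Real.sin (κ * r * s)) /
        (Real.cos (κ * r * s) + ξd0 / r * Real.sin (κ * r * s)) := by
      rw [Real.tan_eq_sin_div_cos, div_eq_div_iff hc hpos, Real.cos_sub, Real.sin_sub, hsin0]
      ring
    have hp := Real.sin_sq_add_cos_sq (κ * r * s)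
    obtain ⟨p, rfl⟩ : ∃ p, ξd0 = p * r := ⟨ξd0 / r, by field_simp⟩
    have ep : p * r / r = p := by field_simp
    have e1 : ((p * r) ^ 2 + r ^ 2) / (2 * r ^ 2) = (1 + p ^ 2) / 2 := by field_simp; ring
    have e2 : (r ^ 2 - (p * r) ^ 2) / (2 * r ^ 2) = (1 - p ^ 2) / 2 := by field_simp
    beta_reduce
    rw [ht', e, Real.sin_two_mul, Real.cos_two_mul']
    rw [ep] at hpos ⊢
    rw [e1, e2]
    generalize Real.sin (κ * r * s) = S at *
    generalize Real.cos (κ * r * s) = C at *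
    have ex : (1 + p ^ 2) / 2 + (C ^ 2 - S ^ 2) * ((1 - p ^ 2) / 2) + 2 * S * C * p
        = (C + p * S) ^ 2 := by
      linear_combination (-(1 + p ^ 2) / 2) * hp
    rw [ex]
    field_simp
    ring
  · have h := ((((((hasDerivAt_id s).mul_const (ξd0 ^ 2 + r ^ 2)).div_const (2 * r ^ 2)).add
      ((hS.div_const (2 * κ * r)).mul_const ((r ^ 2 - ξd0 ^ 2) / (2 * r ^ 2)))).add
      (((hC.const_sub 1).div_const (2 * κ * r)).mul_const (ξd0 / r))).const_mul
      (2 * κ * xd0)).smul_const ξ₀' |>.const_add x₀'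
    refine h.congr_deriv ?_
    congr 1
    field_simp
  · have h := ((Real.hasDerivAt_tan hc).comp s hlin2).const_mul r
    refine h.congr_deriv ?_
    simp only [hrr]
    rw [Real.tan_eq_sin_div_cos]
    have hp := Real.sin_sq_add_cos_sq (θ₀ - κ * r * s)
    generalize Real.sin (θ₀ - κ * r * s) = S at *
    generalize Real.cos (θ₀ - κ * r * s) = C at *
    field_simp
    linear_combination (1 : ℝ) * hp

end
end

section
/- Fix d ≥ 2, κ > 0, x_{d0} > 0, ξ₀′ ∈ ℝ^{d−1} with ξ₀′ ≠ 0, ξ_{d0} ∈ ℝ, τ₀ ∈ ℝ, x₀′ ∈ ℝ^{d−1}, t₀ ∈ ℝ. Set θ₀ := arctan(ξ_{d0}/|ξ₀′|), and define for all s ∈ ℝ: t(s) = −2τ₀ s + t₀, x_d(s) = x_{d0} [ (ξ_{d0}² + |ξ₀′|²)/(2|ξ₀′|²) + cos(2κ|ξ₀′|s)(|ξ₀′|² − ξ_{d0}²)/(2|ξ₀′|²) + sin(2κ|ξ₀′|s) ξ_{d0}/|ξ₀′| ], x′(s) = x₀′ + 2κ ξ₀′ x_{d0} [ s(ξ_{d0}²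 + |ξ₀′|²)/(2|ξ₀′|²) + (sin(2κ|ξ₀′|s)/(2κ|ξ₀′|))·(|ξ₀′|² − ξ_{d0}²)/(2|ξ₀′|²) + ((1−cos(2κ|ξ₀′|s))/(2κ|ξ₀′|))·(ξ_{d0}/|ξ₀′|) ]. Then: (i) x_d(s) = 0 if and only if s = s_k := (θ₀ − (2k+1)π/2)/(κ|ξ₀′|) for some k ∈ ℤ; (ii) for every k ∈ ℤ, s_k − s_{k+1} = π/(κ|ξ₀′|) and t(s_{k+1}) − t(s_k) = 2πτ₀/(κ|ξ₀′|); (iii) for every k ∈ ℤ, x′(s_{k+1}) − x′(s_k) = −π x_{d0} (ξ₀′/|ξ₀′|)(|ξ₀′|² + ξ_{d0}²)/|ξ₀′|². -/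
open Real

noncomputable section

/-- collision times of the projected bicharacteristics with the
boundary `{x_d = 0}`, their equal spacing, and the tangential displacement
between consecutive reflections. -/
theorem stmt5 {d : ℕ} (hd : 2 ≤ d) (κ : ℝ) (hκ : 0 < κ)
    (xd0 : ℝ) (hxd0 : 0 < xd0)
    (ξ₀' : EuclideanSpace ℝ (Fin (d - 1))) (hξ : ξ₀' ≠ 0) (ξd0 τ₀ : ℝ)
    (x₀' : EuclideanSpace ℝ (Fin (d - 1))) (t₀ : ℝ)
    (θ₀ : ℝ) (hθ : θ₀ = Real.arctan (ξd0 / ‖ξ₀'‖))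
    (t xd : ℝ → ℝ) (x' : ℝ → EuclideanSpace ℝ (Fin (d - 1)))
    (ht : ∀ s, t s = -2 * τ₀ * s + t₀)
    (hxd : ∀ s, xd s = xd0 *
      ((ξd0 ^ 2 + ‖ξ₀'‖ ^ 2) / (2 * ‖ξ₀'‖ ^ 2)
        + Real.cos (2 * κ * ‖ξ₀'‖ * s) * ((‖ξ₀'‖ ^ 2 - ξd0 ^ 2) / (2 * ‖ξ₀'‖ ^ 2))
        + Real.sin (2 * κ * ‖ξ₀'‖ * s) * (ξd0 / ‖ξ₀'‖)))
    (hx' : ∀ s, x' s = x₀' +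
      (2 * κ * xd0 *
        (s * (ξd0 ^ 2 + ‖ξ₀'‖ ^ 2) / (2 * ‖ξ₀'‖ ^ 2)
          + (Real.sin (2 * κ * ‖ξ₀'‖ * s) / (2 * κ * ‖ξ₀'‖))
              * ((‖ξ₀'‖ ^ 2 - ξd0 ^ 2) / (2 * ‖ξ₀'‖ ^ 2))
          + ((1 - Real.cos (2 * κ * ‖ξ₀'‖ * s)) / (2 * κ * ‖ξ₀'‖))
              * (ξd0 / ‖ξ₀'‖))) • ξ₀')
    (sk : ℤ → ℝ)
    (hsk : ∀ k : ℤ, sk k = (θ₀ - (2 * (k : ℝ) + 1) * π / 2) / (κ * ‖ξ₀'‖)) :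
    (∀ s : ℝ, xd s = 0 ↔ ∃ k : ℤ, s = sk k) ∧
    (∀ k : ℤ, sk k - sk (k + 1) = π / (κ * ‖ξ₀'‖) ∧
      t (sk (k + 1)) - t (sk k) = 2 * π * τ₀ / (κ * ‖ξ₀'‖)) ∧
    (∀ k : ℤ, x' (sk (k + 1)) - x' (sk k)
      = (-(π * xd0 * (‖ξ₀'‖ ^ 2 + ξd0 ^ 2)) / ‖ξ₀'‖ ^ 3) • ξ₀') := by
  have hr : 0 < ‖ξ₀'‖ := norm_pos_iff.mpr hξ
  set r := ‖ξ₀'‖ with hrdef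
  have hκ0 := hκ.ne'
  have hr0 := hr.ne'
  have hdiff : ∀ k : ℤ, sk k - sk (k + 1) = π / (κ * r) := by
    intro k
    rw [hsk, hsk]
    push_cast
    field_simp
    ring
  refine ⟨?_, ?_, ?_⟩
  · intro s
    have hc : 0 < Real.cos θ₀ := by rw [hθ]; exact Real.cos_arctan_pos _
    have hξd : ξd0 = r * (Real.sin θ₀ / Real.cos θ₀) := by
      rw [← Real.tan_eq_sin_div_cos, hθ, Real.tan_arctan]
      field_simp
    have key : xd s = xd0 * (Real.cos (κ * r * s - θ₀) / Real.cos θ₀) ^ 2 := by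
      have e : 2 * κ * r * s = 2 * (κ * r * s) := by ring
      have hc0 := hc.ne'
      rw [hxd, e, Real.cos_two_mul, Real.sin_two_mul, Real.cos_sub, hξd]
      have h1 := Real.sin_sq_add_cos_sq (κ * r * s)
      generalize Real.sin (κ * r * s) = S at *
      generalize Real.cos (κ * r * s) = C at *
      generalize Real.sin θ₀ = a at *
      generalize Real.cos θ₀ = b at *
      field_simp
      linear_combination (-2 * a ^ 2) * h1
    have h2 : xd s = 0 ↔ Real.cos (κ * r * s - θ₀) = 0 := by
      rw [key]
      simp [hxd0.ne', hc.ne']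
    rw [h2, Real.cos_eq_zero_iff]
    constructor
    · rintro ⟨k, hk⟩
      refine ⟨-k - 1, ?_⟩
      rw [hsk, eq_div_iff (by positivity)]
      push_cast
      linear_combination hk
    · rintro ⟨k, hk⟩
      refine ⟨-k - 1, ?_⟩
      rw [hsk, eq_div_iff (by positivity)] at hk
      push_cast
      linear_combination hk
  · intro k
    refine ⟨hdiff k, ?_⟩
    rw [ht, ht]
    linear_combination (2 * τ₀) * hdiff k
  · intro k
    have h1 : sk (k + 1) = sk k - π / (κ * r) := by linear_combination -hdiff k
    have h2 : 2 * κ * r * sk (k + 1) = 2 * κ * r * sk k - 2 * π := by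
      rw [h1]; field_simp
    rw [hx', hx', h2, Real.sin_sub_two_pi, Real.cos_sub_two_pi, h1, add_sub_add_left_eq_sub,
      ← sub_smul]
    congr 1
    field_simp
    ring

end
end

section
/- Let d ≥ 2, μ > 0, and ψ ∈ C_c^∞(ℝ^{d−1}) with supp ψ ⊆ {η : 0 < c₀ ≤ |η| ≤ c₁}. Then there exists C > 0, depending only on d, μ, ψ, such that for every j ≥ 0, every f₀ ∈ 𝒮(ℝ^{d−1}), and every t ∈ (0, 1], the function f(t, x′) := (2π)^{1−d} ∫_{ℝ^{d−1}} e^{i x′·ξ′} e^{−i t μ^{1/2} |ξ′|^{1/2}} ψ(2^{−2j} ξ′) f̂₀(ξ′) dξ′ satisfies ‖f(t, ·)‖_{L^∞(ℝ^{d−1})} ≤ C t^{−(d−1)/2} 2^{3j(d−1)/2} ‖f₀‖_{L¹(ℝ^{d−1})}. -/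
open Real MeasureTheory
open scoped RealInnerProductSpace

noncomputable section

/-- The Fourier transform `f̂(ξ) = ∫ e^{−ix·ξ} f(x) dx`. -/
def fhat {n : ℕ} (φ : EuclideanSpace ℝ (Fin n) → ℂ)
    (ξ : EuclideanSpace ℝ (Fin n)) : ℂ :=
  ∫ x : EuclideanSpace ℝ (Fin n), Complex.exp (-Complex.I * (⟪x, ξ⟫ : ℝ)) * φ x

section NSP
open scoped ContDiff

variable {P E : Type*} [NormedAddCommGroup P] [NormedSpace ℝ P]
  [NormedAddCommGroup E] [NormedSpace ℝ E]

lemma slice_cs {W : P × E → ℂ} (hW : HasCompactSupport W) (p : P) :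
    HasCompactSupport (fun η => W (p, η)) := by
  refine HasCompactSupport.intro (hW.image continuous_snd) (fun x hx => ?_)
  by_contra h
  exact hx ⟨(p, x), subset_tsupport _ h, rfl⟩

lemma glue {X : Type*} [NormedAddCommGroup X] [NormedSpace ℝ X] {Ω : Set X} {a g : X → ℂ}
    (ha : ContDiff ℝ ∞ a) (hs : tsupport a ⊆ Ω) (hg : ∀ z ∈ Ω, ContDiffAt ℝ ∞ g z) :
    ContDiff ℝ ∞ (fun z => g z * a z) := by
  rw [contDiff_iff_contDiffAt]
  intro z
  by_cases hz : z ∈ tsupport a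
  · exact (hg z (hs hz)).mul ha.contDiffAt
  · have h0 : (fun z => g z * a z) =ᶠ[nhds z] fun _ => 0 := by
      filter_upwards [notMem_tsupport_iff_eventuallyEq.1 hz] with w hw
      simp [hw]
    exact contDiffAt_const.congr_of_eventuallyEq h0

variable [FiniteDimensional ℝ E] [MeasurableSpace E] [BorelSpace E] (m : Measure E)
  [m.IsAddHaarMeasure]

lemma slice_hasFDerivAt {W : P × E → ℂ} (hW : ContDiff ℝ ∞ W) (p : P) (η : E) :
    HasFDerivAt (fun η => W (p, η)) ((fderiv ℝ W (p, η)).comp (ContinuousLinearMap.inr ℝ P E)) η := by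
  have h1 : HasFDerivAt W (fderiv ℝ W (p, η)) (p, η) :=
    (hW.differentiable (by simp) _).hasFDerivAt
  exact h1.comp η (hasFDerivAt_prodMk_right p η)

lemma contDiff_dir {W : P × E → ℂ} (hW : ContDiff ℝ ∞ W) (e : P × E) :
    ContDiff ℝ ∞ (fun z => fderiv ℝ W z e) :=
  (hW.fderiv_right (m := ∞) (by simp)).clm_apply contDiff_const

lemma cs_dir {W : P × E → ℂ} (hc : HasCompactSupport W) (e : P × E) :
    HasCompactSupport (fun z => fderiv ℝ W z e) :=
  hc.fderiv_apply (𝕜 := ℝ) e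

lemma slice_int {W : P × E → ℂ} (hW : Continuous W) (hc : HasCompactSupport W) (p : P) :
    Integrable (fun η => W (p, η)) m :=
  Continuous.integrable_of_hasCompactSupport (by fun_prop) (slice_cs hc p)

lemma slice_ibp {W : P × E → ℂ} (hW : ContDiff ℝ ∞ W) (hc : HasCompactSupport W) (p : P) (e : E) :
    ∫ η, fderiv ℝ W (p, η) (0, e) ∂m = 0 := by
  have key : ∀ η, fderiv ℝ (fun η => W (p, η)) η e = fderiv ℝ W (p, η) (0, e) := by
    intro η
    rw [(slice_hasFDerivAt hW p η).fderiv]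
    simp
  have := integral_mul_fderiv_eq_neg_fderiv_mul_of_integrable (μ := m) (𝕜 := ℂ)
    (f := fun _ => (1 : ℂ)) (g := fun η => W (p, η)) (v := e) (by simp)
    (by
      simp only [key, one_mul]
      exact slice_int m (contDiff_dir hW _).continuous (cs_dir hc _) p)
    (by simpa using slice_int m hW.continuous hc p)
    (by intro x _; simp)
    (by intro x _; exact (slice_hasFDerivAt hW p x).differentiableAt)
  simpa [key] using this

lemma contDiffAt_exp {X : Type*} [NormedAddCommGroup X] [NormedSpace ℝ X] {G : X → ℝ} {z : X}
    (hG : ContDiffAt ℝ ∞ G z) (lam : ℝ) :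
    ContDiffAt ℝ ∞ (fun z => Complex.exp (Complex.I * ((lam * G z : ℝ) : ℂ))) z := by
  have h2 : ContDiffAt ℝ ∞ (fun z => ((lam * G z : ℝ) : ℂ)) z :=
    Complex.ofRealCLM.contDiff.contDiffAt.comp z (contDiffAt_const.mul hG)
  exact (contDiffAt_const.mul h2).cexp

theorem nsp {Ω : Set (P × E)} {G : P × E → ℝ}
    (hG : ∀ z ∈ Ω, ContDiffAt ℝ ∞ G z) (hne : ∀ z ∈ Ω, ∃ e : E, fderiv ℝ G z (0, e) ≠ 0) (N : ℕ) :
    ∀ a : P × E → ℂ, ContDiff ℝ ∞ a → HasCompactSupport a → tsupport a ⊆ Ω →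
      ∃ C : ℝ, ∀ p : P, ∀ lam : ℝ, 0 < lam →
        lam ^ N * ‖∫ η, Complex.exp (Complex.I * ((lam * G (p, η) : ℝ) : ℂ)) * a (p, η) ∂m‖ ≤ C := by
  induction N with
  | zero =>
    intro a ha hc hs
    obtain ⟨M, hM⟩ := hc.exists_bound_of_continuous ha.continuous
    set K := Prod.snd '' (tsupport a) with hK
    have hKc : IsCompact K := hc.image continuous_snd
    refine ⟨M * m.real K, fun p lam _ => ?_⟩
    rw [pow_zero, one_mul]
    rw [← setIntegral_eq_integral_of_forall_compl_eq_zero (s := K)]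
    · refine norm_setIntegral_le_of_norm_le_const hKc.measure_lt_top (fun x _ => ?_)
      rw [norm_mul, mul_comm Complex.I, Complex.norm_exp_ofReal_mul_I, one_mul]
      exact hM _
    · intro x hx
      have : a (p, x) = 0 := by
        by_contra h
        exact hx ⟨(p, x), subset_tsupport _ h, rfl⟩
      simp [this]
  | succ N ih =>
    intro a ha hc hs
    set b := Module.finBasis ℝ E
    let D : Fin (Module.finrank ℝ E) → P × E → ℝ := fun i z => fderiv ℝ G z (0, b i)
    let S : P × E → ℝ := fun z => ∑ i, D i z ^ 2
    have hD : ∀ i, ∀ z ∈ Ω, ContDiffAt ℝ ∞ (D i) z := fun i z hz =>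
      ((hG z hz).fderiv_right (m := ∞) (by simp)).clm_apply contDiffAt_const
    have hSd : ∀ z ∈ Ω, ContDiffAt ℝ ∞ S z := fun z hz =>
      ContDiffAt.sum (fun i _ => (hD i z hz).pow 2)
    have hS : ∀ z ∈ Ω, S z ≠ 0 := by
      intro z hz h0
      obtain ⟨e, he⟩ := hne z hz
      have h1 : ∀ i, D i z = 0 := by
        intro i
        have := (Finset.sum_eq_zero_iff_of_nonneg (fun i _ => sq_nonneg (D i z))).1 h0 i
          (Finset.mem_univ i)
        simpa using this
      have h2 : ((fderiv ℝ G z).comp (ContinuousLinearMap.inr ℝ P E) : E →ₗ[ℝ] ℝ) = 0 := by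
        apply b.ext
        intro i
        simpa [D] using h1 i
      apply he
      simpa using congrArg (fun L : E →ₗ[ℝ] ℝ => L e) h2
    let q : Fin (Module.finrank ℝ E) → P × E → ℂ := fun i z => ((D i z / S z : ℝ) : ℂ)
    have hq : ∀ i, ∀ z ∈ Ω, ContDiffAt ℝ ∞ (q i) z := fun i z hz =>
      Complex.ofRealCLM.contDiff.contDiffAt.comp z ((hD i z hz).div (hSd z hz) (hS z hz))
    let B : Fin (Module.finrank ℝ E) → P × E → ℂ := fun i z => q i z * a z
    have hB : ∀ i, ContDiff ℝ ∞ (B i) := fun i => glue ha hs (hq i)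
    have hBc : ∀ i, HasCompactSupport (B i) := fun i => hc.mul_left
    have hBs : ∀ i, tsupport (B i) ⊆ tsupport a := fun i =>
      closure_mono (Function.support_mul_subset_right _ _)
    let A : P × E → ℂ := fun z => ∑ i, fderiv ℝ (B i) z (0, b i)
    have hA : ContDiff ℝ ∞ A := ContDiff.sum (fun i _ => contDiff_dir (hB i) _)
    have hAs : tsupport A ⊆ tsupport a := by
      intro z hz
      by_contra hza
      refine (notMem_tsupport_iff_eventuallyEq.2 ?_) hz
      filter_upwards [(notMem_tsupport_iff_eventuallyEq.1 hza).eventuallyEq_nhds] with w hw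
      refine Finset.sum_eq_zero (fun i _ => ?_)
      have : B i =ᶠ[nhds w] fun _ => 0 := by
        filter_upwards [hw] with v hv
        simp [B, hv]
      rw [this.fderiv_eq]
      simp
    have hAc : HasCompactSupport A := hc.of_isClosed_subset (isClosed_tsupport _) hAs
    obtain ⟨C, hC⟩ := ih A hA hAc (hAs.trans hs)
    refine ⟨C, fun p lam hlam => ?_⟩
    let ex : P × E → ℂ := fun z => Complex.exp (Complex.I * ((lam * G z : ℝ) : ℂ))
    have hex : ∀ z ∈ Ω, ContDiffAt ℝ ∞ ex z := fun z hz => contDiffAt_exp (hG z hz) lam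
    have hW : ∀ i, ContDiff ℝ ∞ (fun z => ex z * B i z) := fun i =>
      glue (hB i) ((hBs i).trans hs) hex
    have hWc : ∀ i, HasCompactSupport (fun z => ex z * B i z) := fun i => (hBc i).mul_left
    have hid : ∀ z, ∑ i, fderiv ℝ (fun z => ex z * B i z) z (0, b i)
        = Complex.I * lam * (ex z * a z) + ex z * A z := by
      intro z
      by_cases hz : z ∈ tsupport a
      · have hzΩ := hs hz
        have hGd : HasFDerivAt G (fderiv ℝ G z) z :=
          ((hG z hzΩ).differentiableAt (by simp)).hasFDerivAt
        have hexd : ∀ v, fderiv ℝ ex z v = Complex.I * lam * (fderiv ℝ G z v : ℝ) * ex z := by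
          intro v
          have h1 : HasFDerivAt (fun z => ((lam * G z : ℝ) : ℂ))
              (Complex.ofRealCLM.comp (lam • fderiv ℝ G z)) z :=
            Complex.ofRealCLM.hasFDerivAt.comp z (hGd.const_mul lam)
          have h2 := (h1.const_mul Complex.I).cexp
          rw [h2.fderiv]
          simp [ex]
          ring
        have h1 : ∀ i, fderiv ℝ (fun z => ex z * B i z) z (0, b i)
            = ex z * fderiv ℝ (B i) z (0, b i)
              + Complex.I * lam * (ex z * a z) * (((D i z) ^ 2 / S z : ℝ) : ℂ) := by
          intro i
          rw [fderiv_fun_mul ((hex z hzΩ).differentiableAt (by simp))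
            ((hB i).differentiable (by simp) z)]
          simp only [ContinuousLinearMap.add_apply, ContinuousLinearMap.smul_apply, hexd,
            smul_eq_mul, B, q, D]
          push_cast
          ring
        rw [Finset.sum_congr rfl (fun i _ => h1 i), Finset.sum_add_distrib, ← Finset.mul_sum,
          ← Finset.mul_sum, ← Complex.ofReal_sum, ← Finset.sum_div, div_self (hS z hzΩ)]
        simp [A]
        ring
      · have ha0 : a z = 0 := image_eq_zero_of_notMem_tsupport hz
        have hA0 : A z = 0 := image_eq_zero_of_notMem_tsupport (fun h => hz (hAs h))
        rw [ha0, hA0]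
        simp only [mul_zero, add_zero]
        refine Finset.sum_eq_zero (fun i _ => ?_)
        have : (fun z => ex z * B i z) =ᶠ[nhds z] fun _ => 0 := by
          filter_upwards [notMem_tsupport_iff_eventuallyEq.1 hz] with w hw
          simp [B, hw]
        rw [this.fderiv_eq]
        simp
    have hexa : Integrable (fun η => ex (p, η) * a (p, η)) m :=
      slice_int m (glue ha hs hex).continuous (hc.mul_left (f := ex)) p
    have hexA : Integrable (fun η => ex (p, η) * A (p, η)) m :=
      slice_int m (glue hA (hAs.trans hs) hex).continuous (hAc.mul_left (f := ex)) p
    have hzero : Complex.I * lam * (∫ η, ex (p, η) * a (p, η) ∂m) + ∫ η, ex (p, η) * A (p, η) ∂m = 0 := by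
      rw [← integral_const_mul, ← integral_add (hexa.const_mul _) hexA]
      simp only [← hid]
      rw [integral_finsetSum]
      · exact Finset.sum_eq_zero (fun i _ => slice_ibp m (hW i) (hWc i) p _)
      · intro i _
        exact slice_int m (contDiff_dir (hW i) _).continuous (cs_dir (hWc i) _) p
    have hnorm : lam * ‖∫ η, ex (p, η) * a (p, η) ∂m‖ = ‖∫ η, ex (p, η) * A (p, η) ∂m‖ := by
      rw [← norm_neg (∫ η, ex (p, η) * A (p, η) ∂m), ← eq_neg_of_add_eq_zero_left hzero]
      simp [abs_of_pos hlam]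
    calc lam ^ (N + 1) * ‖∫ η, ex (p, η) * a (p, η) ∂m‖
        = lam ^ N * (lam * ‖∫ η, ex (p, η) * a (p, η) ∂m‖) := by ring
      _ ≤ C := by rw [hnorm]; exact hC p lam hlam

end NSP

section Phase
open scoped ContDiff

variable {E : Type*} [NormedAddCommGroup E] [InnerProductSpace ℝ E]

def Den (z : (ℝ × E) × E) : ℝ :=
  (√‖z.2 + z.1.1 • z.1.2‖ + √‖z.2‖) * (‖z.2 + z.1.1 • z.1.2‖ + ‖z.2‖)

def Gf (z : (ℝ × E) × E) : ℝ :=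
  (2 * ⟪z.2, z.1.2⟫ + z.1.1 * ‖z.1.2‖ ^ 2) / Den z

def Om (E : Type*) [NormedAddCommGroup E] [InnerProductSpace ℝ E] : Set ((ℝ × E) × E) :=
  {z | z.1.2 ≠ 0 ∧ z.2 ≠ 0 ∧ z.2 + z.1.1 • z.1.2 ≠ 0}

lemma Den_pos {z : (ℝ × E) × E} (hz : z ∈ Om E) : 0 < Den z := by
  obtain ⟨_, h1, h2⟩ := hz
  have h1 := norm_pos_iff.2 h1
  have h2 := norm_pos_iff.2 h2
  have := Real.sqrt_pos.2 h1
  have := Real.sqrt_pos.2 h2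
  unfold Den
  positivity

lemma Den_smooth {z : (ℝ × E) × E} (hz : z ∈ Om E) : ContDiffAt ℝ ∞ Den z := by
  obtain ⟨_, h1, h2⟩ := hz
  have e1 : ContDiffAt ℝ ∞ (fun z : (ℝ × E) × E => ‖z.2‖) z :=
    contDiffAt_snd.norm ℝ h1
  have e0 : ContDiffAt ℝ ∞ (fun z : (ℝ × E) × E => z.2 + z.1.1 • z.1.2) z := by fun_prop
  have e2 : ContDiffAt ℝ ∞ (fun z : (ℝ × E) × E => ‖z.2 + z.1.1 • z.1.2‖) z := e0.norm ℝ h2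
  exact ((e2.sqrt (norm_ne_zero_iff.2 h2)).add (e1.sqrt (norm_ne_zero_iff.2 h1))).mul (e2.add e1)

lemma Gf_smooth {z : (ℝ × E) × E} (hz : z ∈ Om E) : ContDiffAt ℝ ∞ Gf z := by
  refine ContDiffAt.div ?_ (Den_smooth hz) (Den_pos hz).ne'
  have h1 : ContDiffAt ℝ ∞ (fun z : (ℝ × E) × E => ⟪z.2, z.1.2⟫) z :=
    contDiffAt_snd.inner ℝ (contDiffAt_fst.snd)
  have h2 : ContDiffAt ℝ ∞ (fun z : (ℝ × E) × E => ‖z.1.2‖ ^ 2) z :=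
    (contDiffAt_fst.snd).norm_sq ℝ
  exact (contDiffAt_const.mul h1).add ((contDiffAt_fst.fst).mul h2)

lemma Gf_mul {z : (ℝ × E) × E} (hz : z ∈ Om E) :
    z.1.1 * Gf z = √‖z.2 + z.1.1 • z.1.2‖ - √‖z.2‖ := by
  have hD := Den_pos hz
  unfold Gf
  rw [← mul_div_assoc, div_eq_iff hD.ne']
  unfold Den
  obtain ⟨⟨r, w⟩, η⟩ := z
  simp only
  have h1 : ‖η + r • w‖ ^ 2 = ‖η‖ ^ 2 + 2 * (r * ⟪η, w⟫) + r ^ 2 * ‖w‖ ^ 2 := by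
    rw [norm_add_sq_real, real_inner_smul_right, norm_smul, mul_pow, Real.norm_eq_abs, sq_abs]
  have h2 := Real.sq_sqrt (norm_nonneg (η + r • w))
  have h3 := Real.sq_sqrt (norm_nonneg η)
  calc r * (2 * ⟪η, w⟫ + r * ‖w‖ ^ 2) = ‖η + r • w‖ ^ 2 - ‖η‖ ^ 2 := by rw [h1]; ring
    _ = (√‖η + r • w‖ ^ 2 - √‖η‖ ^ 2) * (‖η + r • w‖ + ‖η‖) := by rw [h2, h3]; ring
    _ = _ := by ring

lemma line_phi {η e : E} (hη : η ≠ 0) :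
    HasDerivAt (fun s : ℝ => √‖η + s • e‖) (⟪η, e⟫ / ‖η‖ / (2 * √‖η‖)) 0 := by
  have h0 : HasDerivAt (fun s : ℝ => η + s • e) e 0 := by
    simpa using ((hasDerivAt_id (0 : ℝ)).smul_const e).const_add η
  have h1 := h0.norm_sq
  have hp := norm_pos_iff.2 hη
  have h2 := (h1.sqrt (by simpa using hη)).sqrt (by simpa using hη)
  simp only [Real.sqrt_sq (norm_nonneg _), zero_smul, add_zero] at h2
  convert h2 using 1
  field_simp

lemma line_deriv {z : (ℝ × E) × E} {F : (ℝ × E) × E → ℝ} (hF : DifferentiableAt ℝ F z) (e : E) :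
    HasDerivAt (fun s : ℝ => F (z.1, z.2 + s • e)) (fderiv ℝ F z (0, e)) 0 := by
  have h0 : HasDerivAt (fun s : ℝ => (z.1, z.2 + s • e)) ((0 : ℝ × E), e) 0 := by
    refine HasDerivAt.prodMk (hasDerivAt_const _ _) ?_
    simpa using ((hasDerivAt_id (0 : ℝ)).smul_const e).const_add z.2
  have h1 : HasFDerivAt F (fderiv ℝ F z) ((fun s : ℝ => (z.1, z.2 + s • e)) 0) := by
    simpa using hF.hasFDerivAt
  exact h1.comp_hasDerivAt (0 : ℝ) h0

lemma Om_open : IsOpen (Om E) := by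
  refine IsOpen.inter ?_ (IsOpen.inter ?_ ?_)
  · exact isOpen_ne_fun (by fun_prop) (by fun_prop)
  · exact isOpen_ne_fun (by fun_prop) (by fun_prop)
  · exact isOpen_ne_fun (by fun_prop) (by fun_prop)

lemma line_Om {z : (ℝ × E) × E} (hz : z ∈ Om E) (e : E) :
    ∀ᶠ s : ℝ in nhds 0, (z.1, z.2 + s • e) ∈ Om E := by
  have hc : Continuous (fun s : ℝ => (z.1, z.2 + s • e)) := by fun_prop
  exact (Om_open.preimage hc).mem_nhds (by simpa using hz)

lemma Gf_ne {z : (ℝ × E) × E} (hz : z ∈ Om E) : ∃ e : E, fderiv ℝ Gf z (0, e) ≠ 0 := by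
  by_contra hcon
  push Not at hcon
  have hG : ∀ e, HasDerivAt (fun s : ℝ => Gf (z.1, z.2 + s • e)) 0 0 := fun e => by
    have := line_deriv ((Gf_smooth hz).differentiableAt (by simp)) e
    rwa [hcon e] at this
  obtain ⟨hw, hη, hζ⟩ := id hz
  by_cases hr : z.1.1 = 0
  · have hOm := fun e => line_Om hz e
    -- first: inner is zero
    have h1 : ⟪z.2, z.1.2⟫ = 0 := by
      have hs : HasDerivAt (fun s : ℝ => √(1 + s)) (1 / (2 * √(1 + 0))) 0 :=
        HasDerivAt.sqrt (by simpa using (hasDerivAt_id (0:ℝ)).const_add 1) (by norm_num)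
      have hp := (hG z.2).mul hs
      have hev : ((fun s : ℝ => Gf (z.1, z.2 + s • z.2)) * (fun s : ℝ => √(1 + s)))
          =ᶠ[nhds 0] fun _ => Gf z := by
        have : ∀ᶠ s : ℝ in nhds 0, -1 < s := lt_mem_nhds (by norm_num)
        filter_upwards [this] with s hs
        have hs1 : 0 < 1 + s := by linarith
        have e1 : z.2 + s • z.2 = (1 + s) • z.2 := by rw [add_smul, one_smul]
        have hη' := norm_pos_iff.2 hη
        have hq1 := Real.sqrt_pos.2 hη'
        have hq2 := Real.sqrt_pos.2 hs1
        simp only [Pi.mul_apply, Gf, Den, hr, zero_smul, add_zero, zero_mul, e1,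
          real_inner_smul_left, norm_smul, Real.norm_eq_abs, abs_of_pos hs1,
          Real.sqrt_mul hs1.le]
        field_simp
      have h0 := (hp.congr_of_eventuallyEq hev.symm).unique (hasDerivAt_const _ _)
      simp only [zero_mul, zero_smul, add_zero, zero_add, Real.sqrt_one] at h0
      have hz0 : Gf z = 0 := by
        have : (z.1, z.2) = z := rfl
        rw [this] at h0
        linarith
      have hD := Den_pos hz
      simp only [Gf, hr, zero_mul, add_zero, div_eq_zero_iff, hD.ne', or_false] at hz0
      linarith
    have hg0 : Gf z = 0 := by simp [Gf, hr, h1]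
    have hp := (hG z.1.2).mul (line_deriv ((Den_smooth hz).differentiableAt (by simp)) z.1.2)
    have hev : ((fun s : ℝ => Gf (z.1, z.2 + s • z.1.2)) * (fun s : ℝ => Den (z.1, z.2 + s • z.1.2)))
          =ᶠ[nhds 0] fun s => s * (2 * ‖z.1.2‖ ^ 2) := by
      filter_upwards [hOm z.1.2] with s hs
      have hD := (Den_pos hs).ne'
      simp only [Pi.mul_apply]
      rw [Gf, div_mul_cancel₀ _ hD]
      simp only [hr, zero_mul, add_zero, inner_add_left, real_inner_smul_left, h1,
        real_inner_self_eq_norm_sq]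
      ring
    have h0 := (hp.congr_of_eventuallyEq hev.symm).unique
      ((hasDerivAt_id (0:ℝ)).mul_const (2 * ‖z.1.2‖ ^ 2))
    have h3 : (z.1, z.2) = z := rfl
    simp only [zero_mul, zero_smul, add_zero, zero_add, h3, hg0] at h0
    have := norm_pos_iff.2 hw
    have : 0 < ‖z.1.2‖ ^ 2 := by positivity
    linarith
  · set ζ := z.2 + z.1.1 • z.1.2 with hζd
    have key : ∀ e, ⟪ζ, e⟫ / ‖ζ‖ / (2 * √‖ζ‖) = ⟪z.2, e⟫ / ‖z.2‖ / (2 * √‖z.2‖) := by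
      intro e
      have h1 := (line_phi (e := e) hζ).sub (line_phi (e := e) hη)
      have h2 := (hG e).const_mul z.1.1
      have hev : (fun s : ℝ => z.1.1 * Gf (z.1, z.2 + s • e)) =ᶠ[nhds 0]
          ((fun s : ℝ => √‖ζ + s • e‖) - fun s : ℝ => √‖z.2 + s • e‖) := by
        filter_upwards [line_Om hz e] with s hs
        have := Gf_mul hs
        simp only at this
        rw [this]
        simp only [Pi.sub_apply, hζd]
        rw [add_right_comm]
      have := (h1.congr_of_eventuallyEq hev).unique h2
      linarith
    have hζp := norm_pos_iff.2 hζ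
    have hηp := norm_pos_iff.2 hη
    have hq1 := Real.sqrt_pos.2 hζp
    have hq2 := Real.sqrt_pos.2 hηp
    have hvec : (1 / ‖ζ‖ / (2 * √‖ζ‖)) • ζ = (1 / ‖z.2‖ / (2 * √‖z.2‖)) • z.2 := by
      refine ext_inner_right ℝ (fun e => ?_)
      rw [real_inner_smul_left, real_inner_smul_left]
      have := key e
      calc _ = ⟪ζ, e⟫ / ‖ζ‖ / (2 * √‖ζ‖) := by ring
        _ = _ := this
        _ = _ := by ring
    have hn := congrArg norm hvec
    rw [norm_smul, norm_smul, Real.norm_eq_abs, Real.norm_eq_abs, abs_of_pos (by positivity),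
      abs_of_pos (by positivity)] at hn
    have hsq : √‖ζ‖ = √‖z.2‖ := by
      field_simp at hn
      linarith
    have hnn : ‖ζ‖ = ‖z.2‖ := by
      rw [← Real.sq_sqrt hζp.le, hsq, Real.sq_sqrt hηp.le]
    rw [hnn] at hvec
    have hzz : ζ = z.2 := smul_right_injective E (r := (1 / ‖z.2‖ / (2 * √‖z.2‖))) (by positivity) hvec
    have : z.1.1 • z.1.2 = 0 := by
      rw [hζd] at hzz
      simpa using hzz
    rcases smul_eq_zero.1 this with h | h
    · exact hr h
    · exact hw h

end Phase

section Bound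
open scoped ContDiff

variable {E : Type*} [NormedAddCommGroup E] [InnerProductSpace ℝ E] [FiniteDimensional ℝ E]
  [MeasurableSpace E] [BorelSpace E]

lemma Jbound (c₀ c₁ : ℝ) (hc₀ : 0 < c₀) (ψ : E → ℝ) (hψ : ContDiff ℝ ∞ ψ)
    (hψc : HasCompactSupport ψ) (hsupp : tsupport ψ ⊆ {η : E | c₀ ≤ ‖η‖ ∧ ‖η‖ ≤ c₁}) (N : ℕ) :
    ∃ C : ℝ, 0 ≤ C ∧ ∀ h : E, ∀ lam : ℝ, 0 < lam →
      ‖∫ η, Complex.exp (Complex.I * ((lam * (√‖η + h‖ - √‖η‖) : ℝ) : ℂ)) *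
        ((ψ (η + h) * ψ η : ℝ) : ℂ)‖ ≤ C * (1 + lam * ‖h‖) ^ (-(N : ℝ)) := by
  let χ : ContDiffBump (1 : ℝ) := ⟨1/4, 1/2, by norm_num, by norm_num⟩
  let a : (ℝ × E) × E → ℂ := fun z =>
    ((χ (‖z.1.2‖ ^ 2) * (ψ (z.2 + z.1.1 • z.1.2) * ψ z.2) : ℝ) : ℂ)
  have ha : ContDiff ℝ ∞ a := by
    refine Complex.ofRealCLM.contDiff.comp ?_
    refine ContDiff.mul ?_ (ContDiff.mul ?_ ?_)
    · exact χ.contDiff.comp ((contDiff_fst.snd).norm_sq ℝ)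
    · exact hψ.comp (by fun_prop)
    · exact hψ.comp (by fun_prop)
  let K : Set ((ℝ × E) × E) := {z | 1/2 ≤ ‖z.1.2‖ ^ 2 ∧ ‖z.1.2‖ ^ 2 ≤ 3/2 ∧
    (c₀ ≤ ‖z.2‖ ∧ ‖z.2‖ ≤ c₁) ∧ c₀ ≤ ‖z.2 + z.1.1 • z.1.2‖ ∧ ‖z.2 + z.1.1 • z.1.2‖ ≤ c₁}
  have hKcl : IsClosed K := by
    simp only [K, Set.setOf_and]
    refine IsClosed.inter ?_ (IsClosed.inter ?_ (IsClosed.inter (IsClosed.inter ?_ ?_)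
      (IsClosed.inter ?_ ?_)))
    all_goals exact isClosed_le (by fun_prop) (by fun_prop)
  have hKb : Bornology.IsBounded K := by
    refine (Metric.isBounded_closedBall (x := (0 : (ℝ × E) × E)) (r := 2 + 4 * c₁)).subset ?_
    rintro ⟨⟨r, w⟩, η⟩ ⟨h1, h2, ⟨_, h4⟩, _, h6⟩
    simp only at h1 h2 h4 h6
    have hw1 : 1/2 ≤ ‖w‖ := by nlinarith [norm_nonneg w]
    have hw2 : ‖w‖ ≤ 2 := by nlinarith [norm_nonneg w]
    have hc : 0 ≤ c₁ := (norm_nonneg η).trans h4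
    have h7 : ‖r • w‖ ≤ 2 * c₁ := by
      have := norm_sub_le (η + r • w) η
      rw [add_sub_cancel_left] at this
      linarith
    rw [norm_smul] at h7
    have hr : ‖r‖ ≤ 4 * c₁ := by nlinarith [norm_nonneg r]
    simp only [mem_closedBall_zero_iff, Prod.norm_def, sup_le_iff]
    refine ⟨⟨?_, ?_⟩, ?_⟩ <;> linarith
  have hKc : IsCompact K := Metric.isCompact_of_isClosed_isBounded hKcl hKb
  have hsub : ∀ η, ψ η ≠ 0 → c₀ ≤ ‖η‖ ∧ ‖η‖ ≤ c₁ := fun η h => hsupp (subset_tsupport _ h)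
  have hsK : Function.support a ⊆ K := by
    intro z hz
    simp only [a, Function.mem_support, ne_eq, Complex.ofReal_eq_zero, mul_eq_zero, not_or] at hz
    obtain ⟨h1, h2, h3⟩ := hz
    have h4 : ‖z.1.2‖ ^ 2 ∈ Metric.ball (1 : ℝ) (1/2) := by
      have := χ.support_eq
      have h5 : ‖z.1.2‖ ^ 2 ∈ Function.support χ := h1
      rwa [this] at h5
    rw [Metric.mem_ball, Real.dist_eq, abs_lt] at h4
    exact ⟨by linarith, by linarith, hsub _ h3, hsub _ h2⟩
  have hac : HasCompactSupport a := HasCompactSupport.of_support_subset_isCompact hKc hsK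
  have hKO : K ⊆ Om E := by
    rintro z ⟨h1, h2, ⟨h3, h4⟩, h5, h6⟩
    refine ⟨?_, ?_, ?_⟩
    · intro h; rw [h] at h1; norm_num at h1
    · intro h; rw [h] at h3; simp at h3; linarith
    · intro h; rw [h] at h5; simp at h5; linarith
  have hat : tsupport a ⊆ Om E := (closure_minimal hsK hKcl).trans hKO
  obtain ⟨A, hA⟩ := nsp (volume : Measure E) (fun z hz => Gf_smooth hz) (fun z hz => Gf_ne hz) 0 a ha hac hat
  obtain ⟨B, hB⟩ := nsp (volume : Measure E) (fun z hz => Gf_smooth hz) (fun z hz => Gf_ne hz) N a ha hac hat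
  set D : ℝ := ‖∫ η : E, ((ψ η * ψ η : ℝ) : ℂ)‖ with hD
  have hA0 : 0 ≤ A := le_trans (by positivity) (hA 0 1 one_pos)
  have hB0 : 0 ≤ B := le_trans (by positivity) (hB 0 1 one_pos)
  refine ⟨2 ^ N * (A + B) + D, by positivity, fun h lam hlam => ?_⟩
  by_cases hh : h = 0
  · subst hh
    simp only [add_zero, sub_self, mul_zero, Complex.ofReal_zero, Complex.exp_zero, one_mul, norm_zero,
      Real.one_rpow, mul_one]
    rw [← hD]
    have : 0 ≤ 2 ^ N * (A + B) := by positivity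
    linarith
  have hhp := norm_pos_iff.2 hh
  set J := ∫ η, Complex.exp (Complex.I * ((lam * (√‖η + h‖ - √‖η‖) : ℝ) : ℂ)) *
        ((ψ (η + h) * ψ η : ℝ) : ℂ) with hJ
  let p : ℝ × E := (‖h‖, ‖h‖⁻¹ • h)
  have hp : p.1 • p.2 = h := by
    simp only [p, smul_smul]
    rw [mul_inv_cancel₀ hhp.ne', one_smul]
  have hp1 : ‖p.2‖ = 1 := by
    simp only [p, norm_smul, norm_inv, norm_norm]
    exact inv_mul_cancel₀ hhp.ne'
  have hJe : J = ∫ η, Complex.exp (Complex.I * (((lam * ‖h‖) * Gf (p, η) : ℝ) : ℂ)) * a (p, η) := by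
    rw [hJ]
    congr 1
    ext η
    have hχ : χ (‖p.2‖ ^ 2) = 1 := by
      rw [hp1, one_pow]
      exact χ.one_of_mem_closedBall (Metric.mem_closedBall_self (by norm_num [χ]))
    have haη : a (p, η) = ((ψ (η + h) * ψ η : ℝ) : ℂ) := by
      simp only [a, hχ, hp, one_mul]
    by_cases h0 : a (p, η) = 0
    · rw [h0, ← haη, h0]; simp
    · have := Gf_mul (hat (subset_tsupport _ h0))
      simp only [hp] at this
      rw [haη, mul_assoc lam, ← this]
  have hx : 0 < lam * ‖h‖ := by positivity
  have h1 := hA p _ hx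
  have h2 := hB p _ hx
  rw [← hJe] at h1 h2
  rw [pow_zero, one_mul] at h1
  rw [Real.rpow_neg (by positivity), Real.rpow_natCast, ← div_eq_mul_inv, le_div_iff₀ (by positivity)]
  have hJ0 := norm_nonneg J
  have hD0 : 0 ≤ D := norm_nonneg _
  have hA' : 0 ≤ (2:ℝ) ^ N * A := by positivity
  have hB' : 0 ≤ (2:ℝ) ^ N * B := by positivity
  rcases le_total (lam * ‖h‖) 1 with hle | hle
  · calc ‖J‖ * (1 + lam * ‖h‖) ^ N ≤ A * 2 ^ N := by
          gcongr
          linarith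
      _ ≤ _ := by linarith
  · calc ‖J‖ * (1 + lam * ‖h‖) ^ N ≤ ‖J‖ * (2 * (lam * ‖h‖)) ^ N := by
          gcongr
          linarith
      _ = 2 ^ N * ((lam * ‖h‖) ^ N * ‖J‖) := by rw [mul_pow]; ring
      _ ≤ 2 ^ N * B := by gcongr
      _ ≤ _ := by linarith

lemma Ibound (c₀ c₁ : ℝ) (hc₀ : 0 < c₀) (ψ : E → ℝ) (hψ : ContDiff ℝ ∞ ψ)
    (hψc : HasCompactSupport ψ) (hsupp : tsupport ψ ⊆ {η : E | c₀ ≤ ‖η‖ ∧ ‖η‖ ≤ c₁}) :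
    ∃ C : ℝ, 0 ≤ C ∧ ∀ y : E, ∀ lam : ℝ, 0 < lam →
      ‖∫ η, Complex.exp (Complex.I * (⟪y, η⟫ : ℝ)) *
        Complex.exp (-Complex.I * ((lam * √‖η‖ : ℝ) : ℂ)) * (ψ η : ℂ)‖
        ≤ C * lam ^ (-((Module.finrank ℝ E : ℝ) / 2)) := by
  set n := Module.finrank ℝ E with hn
  obtain ⟨C, hC0, hC⟩ := Jbound c₀ c₁ hc₀ ψ hψ hψc hsupp (n + 1)
  set M := ∫ u : E, (1 + ‖u‖) ^ (-((n + 1 : ℕ) : ℝ)) with hM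
  have hMi : Integrable (fun u : E => (1 + ‖u‖) ^ (-((n + 1 : ℕ) : ℝ))) :=
    integrable_one_add_norm (by rw [← hn]; push_cast; linarith)
  have hM0 : 0 ≤ M := integral_nonneg (fun u => by positivity)
  refine ⟨√(C * M), by positivity, fun y lam hlam => ?_⟩
  let F : E → ℂ := fun η => Complex.exp (Complex.I * (⟪y, η⟫ : ℝ)) *
        Complex.exp (-Complex.I * ((lam * √‖η‖ : ℝ) : ℂ)) * (ψ η : ℂ)
  have hψcont : Continuous ψ := hψ.continuous
  have hFc : Continuous F := by
    simp only [F]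
    fun_prop
  have hFs : HasCompactSupport F :=
    (hψc.comp_left (g := fun x : ℝ => (x : ℂ)) Complex.ofReal_zero).mul_left
  change ‖∫ η, F η‖ ≤ _
  let H : E → E → ℂ := fun h η => (starRingEnd ℂ) (F (η + h)) * F η
  have hprod : ∫ h, ∫ η, H h η = (starRingEnd ℂ) (∫ η, F η) * ∫ η, F η := by
    have hsw : ∫ h, ∫ η, H h η = ∫ η, ∫ h, H h η := by
      refine integral_integral_swap_of_hasCompactSupport ?_ ?_
      · simp only [H, Function.uncurry_def]
        fun_prop
      · have hK : IsCompact ((fun q : E × E => (q.1 - q.2, q.2)) '' (tsupport F ×ˢ tsupport F)) :=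
          (hFs.isCompact.prod hFs.isCompact).image (by fun_prop)
        refine HasCompactSupport.intro hK ?_
        rintro ⟨h, η⟩ hq
        by_contra hne
        simp only [H, Function.uncurry_def, mul_eq_zero, map_eq_zero, not_or] at hne
        exact hq ⟨(η + h, η), ⟨subset_tsupport _ hne.1, subset_tsupport _ hne.2⟩, by simp⟩
    rw [hsw]
    have : ∀ η, ∫ h, H h η = (starRingEnd ℂ) (∫ η, F η) * F η := by
      intro η
      simp only [H]
      rw [integral_mul_const, integral_add_left_eq_self (fun x => (starRingEnd ℂ) (F x)) η, integral_conj]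
    simp only [this]
    rw [integral_const_mul]
  have hH : ∀ h, ‖∫ η, H h η‖ ≤ C * (1 + ‖lam • h‖) ^ (-((n + 1 : ℕ) : ℝ)) := by
    intro h
    have : ∀ η, H h η = Complex.exp (-Complex.I * (⟪y, h⟫ : ℝ)) *
        (Complex.exp (Complex.I * ((lam * (√‖η + h‖ - √‖η‖) : ℝ) : ℂ)) *
        ((ψ (η + h) * ψ η : ℝ) : ℂ)) := by
      intro η
      simp only [H, F, map_mul, ← Complex.exp_conj, map_neg, Complex.conj_I, Complex.conj_ofReal]
      have e : ∀ a b c d x x' : ℂ, Complex.exp a * Complex.exp b * x * (Complex.exp c * Complex.exp d * x')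
          = Complex.exp (a + b + c + d) * (x * x') := by
        intros; simp only [Complex.exp_add]; ring
      rw [e, ← mul_assoc (Complex.exp (-Complex.I * ((⟪y, h⟫ : ℝ) : ℂ))), ← Complex.exp_add]
      push_cast
      congr 2
      rw [inner_add_right]
      push_cast
      ring
    simp only [this]
    rw [integral_const_mul, norm_mul]
    have h1 : ‖Complex.exp (-Complex.I * (⟪y, h⟫ : ℝ))‖ = 1 := by
      rw [show -Complex.I * ((⟪y, h⟫ : ℝ) : ℂ) = ((-⟪y, h⟫ : ℝ) : ℂ) * Complex.I by push_cast; ring,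
        Complex.norm_exp_ofReal_mul_I]
    rw [h1, one_mul, norm_smul, Real.norm_eq_abs, abs_of_pos hlam]
    exact hC h lam hlam
  have hsq : ‖∫ η, F η‖ ^ 2 ≤ C * M * lam ^ (-(n : ℝ)) := by
    calc ‖∫ η, F η‖ ^ 2 = ‖∫ h, ∫ η, H h η‖ := by rw [hprod, norm_mul, RCLike.norm_conj]; ring
      _ ≤ ∫ h, C * (1 + ‖lam • h‖) ^ (-((n + 1 : ℕ) : ℝ)) := by
          refine norm_integral_le_of_norm_le ?_ (Filter.Eventually.of_forall hH)
          exact (hMi.comp_smul hlam.ne').const_mul C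
      _ = C * M * lam ^ (-(n : ℝ)) := by
          rw [integral_const_mul, Measure.integral_comp_smul volume
            (fun u : E => (1 + ‖u‖) ^ (-((n + 1 : ℕ) : ℝ))), ← hn, ← hM, abs_of_pos (by positivity),
            Real.rpow_neg hlam.le, Real.rpow_natCast, smul_eq_mul]
          ring
  refine (pow_le_pow_iff_left₀ (norm_nonneg _) (by positivity) two_ne_zero).1 (hsq.trans_eq ?_)
  rw [mul_pow, Real.sq_sqrt (by positivity), ← Real.rpow_natCast, ← Real.rpow_mul hlam.le]
  congr 2
  push_cast
  ring

end Bound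

lemma kernel_bound {n : ℕ} (ψ : EuclideanSpace ℝ (Fin n) → ℝ) (C : ℝ) (hC : ∀ y : EuclideanSpace ℝ (Fin n), ∀ lam : ℝ, 0 < lam →
      ‖∫ η, Complex.exp (Complex.I * (⟪y, η⟫ : ℝ)) *
        Complex.exp (-Complex.I * ((lam * √‖η‖ : ℝ) : ℂ)) * (ψ η : ℂ)‖
        ≤ C * lam ^ (-((n : ℝ) / 2)))
    (R : ℝ) (hR : 0 < R) (r : ℝ) (hr : 0 < r) (hRr : √R = r) (t : ℝ) (ht : 0 < t)
    (y : EuclideanSpace ℝ (Fin n)) :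
    ‖∫ ξ, Complex.exp (Complex.I * (⟪y, ξ⟫ : ℝ)) *
        (Complex.exp (-Complex.I * ((t * √‖ξ‖ : ℝ) : ℂ)) * (ψ (R⁻¹ • ξ) : ℂ))‖
      ≤ R ^ n * (C * (t * r) ^ (-((n : ℝ) / 2))) := by
  have h1 : ∀ ξ, Complex.exp (Complex.I * (⟪y, ξ⟫ : ℝ)) *
        (Complex.exp (-Complex.I * ((t * √‖ξ‖ : ℝ) : ℂ)) * (ψ (R⁻¹ • ξ) : ℂ)) =
      (fun η => Complex.exp (Complex.I * (⟪R • y, η⟫ : ℝ)) *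
        Complex.exp (-Complex.I * ((t * r * √‖η‖ : ℝ) : ℂ)) * (ψ η : ℂ)) (R⁻¹ • ξ) := by
    intro ξ
    have e1 : ⟪R • y, R⁻¹ • ξ⟫ = ⟪y, ξ⟫ := by
      rw [real_inner_smul_left, real_inner_smul_right]
      field_simp
    have e2 : t * r * √‖R⁻¹ • ξ‖ = t * √‖ξ‖ := by
      rw [norm_smul, norm_inv, Real.norm_eq_abs, abs_of_pos hR, Real.sqrt_mul (by positivity),
        Real.sqrt_inv, hRr]
      field_simp
    simp only [e1, e2]
    ring
  simp only [h1]
  rw [Measure.integral_comp_inv_smul_of_nonneg volume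
    (fun η => Complex.exp (Complex.I * (⟪R • y, η⟫ : ℝ)) *
        Complex.exp (-Complex.I * ((t * r * √‖η‖ : ℝ) : ℂ)) * (ψ η : ℂ)) hR.le,
    norm_smul, Real.norm_eq_abs, abs_of_pos (by positivity), finrank_euclideanSpace_fin]
  exact mul_le_mul_of_nonneg_left (hC _ _ (by positivity)) (by positivity)

/-- frequency-localized dispersive estimate for the half-wave
propagator `e^{−itμ^{1/2}|D|^{1/2}}`. -/
theorem stmt12 {d : ℕ} (hd : 2 ≤ d) (μ : ℝ) (hμ : 0 < μ)
    (c₀ c₁ : ℝ) (hc₀ : 0 < c₀) (hc₀₁ : c₀ ≤ c₁)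
    (ψ : EuclideanSpace ℝ (Fin (d - 1)) → ℝ)
    (hψ : ContDiff ℝ (⊤ : ℕ∞) ψ) (hψc : HasCompactSupport ψ)
    (hsupp : tsupport ψ ⊆
      {η : EuclideanSpace ℝ (Fin (d - 1)) | c₀ ≤ ‖η‖ ∧ ‖η‖ ≤ c₁}) :
    ∃ C : ℝ, 0 < C ∧
      ∀ j : ℕ, ∀ f₀ : SchwartzMap (EuclideanSpace ℝ (Fin (d - 1))) ℂ,
      ∀ t ∈ Set.Ioc (0 : ℝ) 1, ∀ x' : EuclideanSpace ℝ (Fin (d - 1)),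
        ‖(((2 * π) ^ ((1 : ℤ) - (d : ℤ)) : ℝ) : ℂ) *
            ∫ ξ : EuclideanSpace ℝ (Fin (d - 1)),
              Complex.exp (Complex.I * (⟪x', ξ⟫ : ℝ)) *
                Complex.exp (-Complex.I * (t * Real.sqrt μ * Real.sqrt ‖ξ‖ : ℝ)) *
                (ψ (((2 : ℝ) ^ (2 * j))⁻¹ • ξ) : ℂ) * fhat (fun x => f₀ x) ξ‖
          ≤ C * t ^ (-(((d : ℝ) - 1) / 2)) *
              (2 : ℝ) ^ (3 * (j : ℝ) * ((d : ℝ) - 1) / 2) *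
              ∫ x : EuclideanSpace ℝ (Fin (d - 1)), ‖f₀ x‖ := by
  obtain ⟨C, hC0, hC⟩ := Ibound c₀ c₁ hc₀ ψ hψ hψc hsupp
  have hfr : Module.finrank ℝ (EuclideanSpace ℝ (Fin (d - 1))) = d - 1 := by simp
  have hdn : ((d - 1 : ℕ) : ℝ) = (d : ℝ) - 1 := by
    rw [Nat.cast_sub (by omega)]; simp
  rw [hfr] at hC
  have hsμ : 0 < √μ := Real.sqrt_pos.2 hμ
  refine ⟨(2 * π) ^ ((1 : ℤ) - (d : ℤ)) * ((C + 1) * (√μ) ^ (-(((d : ℝ) - 1) / 2))),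
    by positivity, ?_⟩
  intro j f₀ t ht x'
  have ht0 : 0 < t := ht.1
  set R : ℝ := (2 : ℝ) ^ (2 * j) with hR
  have hR0 : 0 < R := by positivity
  have hψcont : Continuous ψ := hψ.continuous
  have hK := kernel_bound ψ C hC R hR0 ((2:ℝ) ^ j) (by positivity)
    (by rw [hR, pow_mul', sq, Real.sqrt_mul_self (by positivity)]) (t * √μ) (by positivity)
  have hf := f₀.integrable (μ := volume)
  rw [norm_mul, Complex.norm_real, Real.norm_eq_abs, abs_of_pos (by positivity)]
  let A : EuclideanSpace ℝ (Fin (d - 1)) → ℂ := fun ξ =>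
    Complex.exp (-Complex.I * (t * Real.sqrt μ * Real.sqrt ‖ξ‖ : ℝ)) * (ψ (R⁻¹ • ξ) : ℂ)
  have hAc : Continuous A := by
    simp only [A]; fun_prop
  have hAs : HasCompactSupport A := by
    refine HasCompactSupport.mul_left ?_
    exact (hψc.comp_smul (inv_ne_zero hR0.ne')).comp_left (g := fun x : ℝ => (x : ℂ)) Complex.ofReal_zero
  have hAi : Integrable A := hAc.integrable_of_hasCompactSupport hAs
  have hfc : Continuous f₀ := f₀.continuous
  have hint : Integrable (Function.uncurry fun ξ x =>
      Complex.exp (Complex.I * (⟪x' - x, ξ⟫ : ℝ)) * (A ξ * f₀ x)) (volume.prod volume) := by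
    refine (hAi.mul_prod hf).mono ?_ ?_
    · refine Continuous.aestronglyMeasurable ?_
      simp only [Function.uncurry_def]
      fun_prop
    · refine Filter.Eventually.of_forall (fun z => ?_)
      simp only [Function.uncurry_def]
      rw [norm_mul, mul_comm Complex.I, Complex.norm_exp_ofReal_mul_I, one_mul]
  have hmain : ∫ ξ : EuclideanSpace ℝ (Fin (d - 1)),
              Complex.exp (Complex.I * (⟪x', ξ⟫ : ℝ)) *
                Complex.exp (-Complex.I * (t * Real.sqrt μ * Real.sqrt ‖ξ‖ : ℝ)) *
                (ψ (R⁻¹ • ξ) : ℂ) * fhat (fun x => f₀ x) ξ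
      = ∫ x, (∫ ξ, Complex.exp (Complex.I * (⟪x' - x, ξ⟫ : ℝ)) * A ξ) * f₀ x := by
    calc _ = ∫ ξ, ∫ x, Complex.exp (Complex.I * (⟪x' - x, ξ⟫ : ℝ)) * (A ξ * f₀ x) := by
          congr 1
          ext ξ
          rw [fhat, ← integral_const_mul]
          congr 1
          ext x
          have : Complex.exp (Complex.I * (⟪x' - x, ξ⟫ : ℝ)) =
              Complex.exp (Complex.I * (⟪x', ξ⟫ : ℝ)) * Complex.exp (-Complex.I * (⟪x, ξ⟫ : ℝ)) := by
            rw [← Complex.exp_add, inner_sub_left]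
            push_cast
            congr 1
            ring
          rw [this]
          simp only [A]
          ring
      _ = ∫ x, ∫ ξ, Complex.exp (Complex.I * (⟪x' - x, ξ⟫ : ℝ)) * (A ξ * f₀ x) :=
          integral_integral_swap hint
      _ = _ := by
          congr 1
          ext x
          rw [← integral_mul_const]
          congr 1
          ext ξ
          ring
  rw [hmain]
  set b : ℝ := R ^ (d - 1) * (C * (t * √μ * 2 ^ j) ^ (-(((d - 1 : ℕ) : ℝ) / 2))) with hb
  have hbd : ‖∫ x, (∫ ξ, Complex.exp (Complex.I * (⟪x' - x, ξ⟫ : ℝ)) * A ξ) * f₀ x‖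
      ≤ b * ∫ x, ‖f₀ x‖ := by
    rw [← integral_const_mul]
    refine norm_integral_le_of_norm_le (hf.norm.const_mul b) (Filter.Eventually.of_forall fun x => ?_)
    rw [norm_mul]
    refine mul_le_mul_of_nonneg_right ?_ (norm_nonneg _)
    have := hK (x' - x)
    simpa only [A, mul_assoc] using this
  have hb2 : b = C * (√μ) ^ (-(((d : ℝ) - 1) / 2)) * t ^ (-(((d : ℝ) - 1) / 2)) *
              (2 : ℝ) ^ (3 * (j : ℝ) * ((d : ℝ) - 1) / 2) := by
    rw [hb, hdn, Real.mul_rpow (by positivity) (by positivity),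
      Real.mul_rpow (by positivity) (by positivity), hR, ← Real.rpow_natCast 2 j,
      ← Real.rpow_mul (by norm_num), ← Real.rpow_natCast _ (d - 1), hdn,
      ← Real.rpow_natCast 2 (2 * j), ← Real.rpow_mul (by norm_num)]
    have : (2 : ℝ) ^ (3 * (j : ℝ) * ((d : ℝ) - 1) / 2) =
        2 ^ (((2 * j : ℕ) : ℝ) * ((d : ℝ) - 1)) * 2 ^ ((j : ℝ) * (-(((d : ℝ) - 1) / 2))) := by
      rw [← Real.rpow_add (by norm_num)]
      congr 1
      push_cast
      ring
    rw [this]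
    ring
  have hI0 : 0 ≤ ∫ x, ‖f₀ x‖ := integral_nonneg (fun _ => norm_nonneg _)
  calc _ ≤ (2 * π) ^ ((1 : ℤ) - (d : ℤ)) * (b * ∫ x, ‖f₀ x‖) := by gcongr
    _ ≤ (2 * π) ^ ((1 : ℤ) - (d : ℤ)) * (((C + 1) * (√μ) ^ (-(((d : ℝ) - 1) / 2)) *
        t ^ (-(((d : ℝ) - 1) / 2)) * (2 : ℝ) ^ (3 * (j : ℝ) * ((d : ℝ) - 1) / 2)) *
        ∫ x, ‖f₀ x‖) := by
      rw [hb2]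
      gcongr
      linarith
    _ = _ := by ring

end
end
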